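/- arXiv:1501.07379 — 2 statements merged into one kernel-verified Lean document; each statement's English description precedes it below -/
import Mathlib

section
/- Let α and β be positive integers with β > 4. Let a₁, a₂, …, a_β be a sequence of β integers which sums to α·β and satisfies aᵢ ≤ 2·α for every i. If for every i the inequality aᵢ·(α·β − aᵢ) ≤ α·(α·β − α) holds, then aᵢ = α for every i. -/
/-- Bandwidth Lemma: if β > 4 integers summing to α·β each satisfy
    aᵢ ≤ 2·α and aᵢ·(α·β − aᵢ) ≤ α·(α·β − α), then every aᵢ = α. -/
theorem bandwidth_lemma (α β : ℕ) (hα : 0 < α) (hβ : 4 < β)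
    (a : Fin β → ℤ)
    (hsum : ∑ i, a i = (α : ℤ) * β)
    (hub : ∀ i, a i ≤ 2 * (α : ℤ))
    (hbw : ∀ i, a i * ((α : ℤ) * β - a i) ≤ (α : ℤ) * ((α : ℤ) * β - α)) :
    ∀ i, a i = (α : ℤ) := by
  have hα' : (0 : ℤ) < α := by exact_mod_cast hα
  have hβ' : (4 : ℤ) < β := by exact_mod_cast hβ
  -- The bandwidth bound says `(a i - α) * (α * β - a i - α) ≤ 0`, and the second factor
  -- is positive because `a i ≤ 2 * α` and `β > 3`.
  have hle : ∀ i, a i ≤ (α : ℤ) := by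
    intro i
    have hpos : 0 < (α : ℤ) * β - a i - α := by nlinarith [hub i]
    by_contra! h
    nlinarith [hbw i, mul_pos (sub_pos.mpr h) hpos]
  -- Since the average of the `a i` is `α`, no `a i` can be strictly below it.
  have hs : ∑ i, a i = ∑ _i : Fin β, (α : ℤ) := by
    rw [hsum]
    simp [mul_comm]
  intro i
  exact (Finset.sum_eq_sum_iff_of_le fun i _ => hle i).mp hs i (Finset.mem_univ i)
end

section
/- Let α and β be positive integers with β > 4. Let a₁, …, a_α and b₁, …, b_β be two sequences of integers whose combined sum is α·β + 2·α, with aᵢ ≤ 3 for every i ≤ α and bᵢ ≤ 2·α for every i ≤ β. If for every i ≤ β the inequality bᵢ·(α·β + 2·α − bᵢ) ≤ α·(α·β + α) holds, and for every i ≤ α the inequality aᵢ·(α·β + 2·α − aᵢ) ≤ 2·(α·β + 2·α − 2) holds, then bᵢ = α for every i ≤ β and aᵢ = 2 for every i ≤ α. -/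
/-!
With `N = α * β + 2 * α`, each bandwidth inequality `x * (N - x) ≤ c * (N - c)` factors as
`(x - c) * (N - x - c) ≤ 0`. The size bounds make the second factor positive, so `x ≤ c`:
each `b i ≤ α` and each `a i ≤ 2`. The prescribed total is the sum of these upper bounds, so
all of them are attained.
-/

/-- Extended Bandwidth Lemma. -/
theorem extended_bandwidth_lemma (α β : ℕ) (hα : 0 < α) (hβ : 4 < β)
    (a : Fin α → ℤ) (b : Fin β → ℤ)
    (hsum : (∑ i, a i) + (∑ i, b i) = (α : ℤ) * β + 2 * α)
    (ha : ∀ i, a i ≤ 3)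
    (hb : ∀ i, b i ≤ 2 * (α : ℤ))
    (hbw_b : ∀ i, b i * ((α : ℤ) * β + 2 * α - b i) ≤ (α : ℤ) * ((α : ℤ) * β + α))
    (hbw_a : ∀ i, a i * ((α : ℤ) * β + 2 * α - a i) ≤ 2 * ((α : ℤ) * β + 2 * α - 2)) :
    (∀ i, b i = (α : ℤ)) ∧ (∀ i, a i = 2) := by
  have hα' : (1 : ℤ) ≤ α := by exact_mod_cast hα
  have hβ' : (5 : ℤ) ≤ β := by exact_mod_cast hβ
  have hN : 5 * (α : ℤ) ≤ α * β := by nlinarith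
  have hb' : ∀ i, b i ≤ α := fun i => by
    by_contra! h
    nlinarith [hbw_b i, hb i,
      mul_pos (sub_pos.2 h) (show (0 : ℤ) < α * β + 2 * α - b i - α by linarith [hb i])]
  have ha' : ∀ i, a i ≤ 2 := fun i => by
    by_contra! h
    nlinarith [hbw_a i, ha i,
      mul_pos (sub_pos.2 h) (show (0 : ℤ) < α * β + 2 * α - a i - 2 by linarith [ha i])]
  have hbs : ∑ i, b i ≤ ∑ _i : Fin β, (α : ℤ) := Finset.sum_le_sum fun i _ => hb' i
  have has : ∑ i, a i ≤ ∑ _i : Fin α, (2 : ℤ) := Finset.sum_le_sum fun i _ => ha' i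
  have hbc : ∑ _i : Fin β, (α : ℤ) = α * β := by simp [mul_comm]
  have hac : ∑ _i : Fin α, (2 : ℤ) = 2 * α := by simp [mul_comm]
  have hbe : ∑ i, b i = ∑ _i : Fin β, (α : ℤ) := by linarith
  have hae : ∑ i, a i = ∑ _i : Fin α, (2 : ℤ) := by linarith
  exact ⟨fun i => (Finset.sum_eq_sum_iff_of_le fun i _ => hb' i).1 hbe i (Finset.mem_univ i),
    fun i => (Finset.sum_eq_sum_iff_of_le fun i _ => ha' i).1 hae i (Finset.mem_univ i)⟩
end
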